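/- Let N be a positive integer, h = (h₁,h₂) ∈ ℤ², τ ∈ H, and t > 0. For 0 < ε < min(1/(1+t²), t²/(1+t²)), the series Θ̃_h(τ,t;ε) := Σ_{x₁ ≡ h₁ (mod N), x₂ ≡ h₂ (mod N)} φ̃_τ( ι_t(x₁+ε, x₂+ε) )·e( ε·(x₁+x₂+2ε)/N ) converges absolutely, as does the series Θ̃_h(τ,t;0) := Σ_{x₁ ≡ h₁ (mod N), x₂ ≡ h₂ (mod N)} φ̃_τ( ι_t(x₁,x₂) ), and lim_{ε→0⁺} [ Θ̃_h(τ,t;ε) − c_{−1}(h)/(2πi·(τ−1)·ε) ] = c_h(0) + Θ̃_h(τ,t;0). -/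

import Mathlib

open MeasureTheory Filter Set

noncomputable section

/-- `e(z) = exp(2πiz)` -/
def eC (z : ℂ) : ℂ := Complex.exp (2 * Real.pi * Complex.I * z)

/-- The complementary error function `erfc(x) = (2/√π)∫_x^∞ e^{-r²} dr`. -/
def erfc (x : ℝ) : ℝ := (2 / Real.sqrt Real.pi) * ∫ r in Set.Ioi x, Real.exp (-(r ^ 2))

/-- `φ*_τ(x,y) = e(((y²-x²)/2)τ)·sgn(x)·erfc(√(2πv)|x|)`. -/
def phiStar (τ : ℂ) (x y : ℝ) : ℂ :=
  eC ((((y : ℂ) ^ 2 - (x : ℂ) ^ 2) / 2) * τ) * (Real.sign x : ℂ) *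
    (erfc (Real.sqrt (2 * Real.pi * τ.im) * |x|) : ℂ)

/-- `φ⁺_τ(x,y) = e(((y²-x²)/2)τ)·sgn(x)·1_{y²>x²}`. -/
def phiPlus (τ : ℂ) (x y : ℝ) : ℂ :=
  eC ((((y : ℂ) ^ 2 - (x : ℂ) ^ 2) / 2) * τ) * (Real.sign x : ℂ) *
    (if x ^ 2 < y ^ 2 then 1 else 0)

/-- `φ̃_τ = φ⁺_τ - φ*_τ`. -/
def phiTilde (τ : ℂ) (x y : ℝ) : ℂ := phiPlus τ x y - phiStar τ x y

/-- The isometry `ι_t(x₁,x₂) = ((t⁻¹x₁+tx₂)/√(2N), (t⁻¹x₁-tx₂)/√(2N))`. -/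
def iota (N : ℕ) (t x₁ x₂ : ℝ) : ℝ × ℝ :=
  ((t⁻¹ * x₁ + t * x₂) / Real.sqrt (2 * N), (t⁻¹ * x₁ - t * x₂) / Real.sqrt (2 * N))

/-- `⟨x⟩ ∈ (0,1]`, the representative of `x` modulo `ℤ` lying in `(0,1]`. -/
def frac01 (x : ℝ) : ℝ := x - ⌈x⌉ + 1

/-- The constant coefficient `c_h(0)`. -/
def cH0 (N : ℕ) (h : ℤ × ℤ) : ℝ :=
  if ¬ ((N : ℤ) ∣ h.1) ∧ (N : ℤ) ∣ h.2 then 1 / 2 - frac01 ((h.1 : ℝ) / N)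
  else if ((N : ℤ) ∣ h.1) ∧ ¬ ((N : ℤ) ∣ h.2) then 1 / 2 - frac01 ((h.2 : ℝ) / N)
  else 0

/-- `c_{-1}(h)`: the number of components of `h` divisible by `N`. -/
def cMinus1 (N : ℕ) (h : ℤ × ℤ) : ℕ :=
  (if (N : ℤ) ∣ h.1 then 1 else 0) + (if (N : ℤ) ∣ h.2 then 1 else 0)

/-- The term of the shifted theta series `Θ̃_h(τ,t;ε)` indexed by `p ∈ ℤ²`,
corresponding to `x_j = h_j + N·p_j`. -/
def thetaTerm (N : ℕ) (h : ℤ × ℤ) (τ : ℂ) (t ε : ℝ) (p : ℤ × ℤ) : ℂ :=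
  phiTilde τ
      (iota N t (((h.1 + N * p.1 : ℤ) : ℝ) + ε) (((h.2 + N * p.2 : ℤ) : ℝ) + ε)).1
      (iota N t (((h.1 + N * p.1 : ℤ) : ℝ) + ε) (((h.2 + N * p.2 : ℤ) : ℝ) + ε)).2 *
    eC (((ε * (((h.1 + N * p.1 : ℤ) : ℝ) + ((h.2 + N * p.2 : ℤ) : ℝ) + 2 * ε) / N : ℝ) : ℂ))

/-!
At `x` off the coordinate axes the term is continuous in `ε` at `0`, and for small `ε` these terms
have a summable majorant, so the limit `ε → 0⁺` may be taken term by term. The same is true on the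
axes for the `φ*_τ`-part, except that at the origin `-φ*_τ` jumps from `0` to `-1`, since
`sgn 0 = 0` but `erfc 0 = 1`.

The `φ⁺_τ`-part vanishes on the axes for `ε = 0`, but the shift pushes the points `(0, n)` and
`(n, 0)` with `n < 0` into the region `x² < y²`. Over a residue class `n ≡ b mod N` these terms form
a geometric progression of ratio `e((τ - 1)ε)`. With `ω = 2πi(τ - 1)`, `r = ⟨-b/N⟩` and some
constant `κ` it sums to `exp(κε² + rωε) / (exp(ωε) - 1) = 1/(ωε) + (r - 1/2) + o(1)`.
The Bernoulli values `r - 1/2` of the two axes, together with the jump at the origin, make up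
`c_h(0)`.
-/

open Topology
open Function (uncurry Injective)

lemma eC_add (z w : ℂ) : eC (z + w) = eC z * eC w := by
  rw [eC, eC, eC, ← Complex.exp_add, mul_add]

lemma eC_zero : eC 0 = 1 := by
  rw [eC, mul_zero, Complex.exp_zero]

lemma eC_nat_mul (n : ℕ) (z : ℂ) : eC (n * z) = eC z ^ n := by
  rw [eC, eC, ← Complex.exp_nat_mul, mul_left_comm]

lemma continuous_eC : Continuous eC := by
  unfold eC
  fun_prop

lemma norm_eC (z : ℂ) : ‖eC z‖ = Real.exp (-(2 * Real.pi * z.im)) := by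
  simp [eC, Complex.norm_exp]

lemma norm_eC_ofReal (x : ℝ) : ‖eC x‖ = 1 := by
  simp [norm_eC]

lemma abs_sign_le_one (x : ℝ) : |Real.sign x| ≤ 1 := by
  rcases Real.sign_apply_eq x with h | h | h <;> simp [h]

lemma continuousAt_real_sign {x : ℝ} (hx : x ≠ 0) : ContinuousAt Real.sign x := by
  refine (continuousAt_const (y := Real.sign x)).congr ?_
  rcases hx.lt_or_gt with h | h
  · filter_upwards [Iio_mem_nhds h] with y hy
    rw [Real.sign_of_neg h, Real.sign_of_neg hy]
  · filter_upwards [Ioi_mem_nhds h] with y hy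
    rw [Real.sign_of_pos h, Real.sign_of_pos hy]

lemma continuous_sign_mul {g : ℝ → ℝ} (hg : Continuous g) (hg₀ : g 0 = 0) :
    Continuous fun x => Real.sign x * g x := by
  refine continuous_iff_continuousAt.2 fun x => ?_
  by_cases hx : x = 0
  · have hlim : Tendsto (fun y => ‖g y‖) (𝓝 0) (𝓝 0) := by
      simpa [hg₀] using hg.norm.tendsto 0
    have hle (y : ℝ) : ‖Real.sign y * g y‖ ≤ ‖g y‖ := by
      rw [norm_mul]
      exact mul_le_of_le_one_left (norm_nonneg _) (abs_sign_le_one y)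
    simpa [ContinuousAt, hx, hg₀] using squeeze_zero_norm hle hlim
  · exact (continuousAt_real_sign hx).mul hg.continuousAt

lemma integrable_exp_neg_sq : Integrable fun r : ℝ => Real.exp (-(r ^ 2)) := by
  simpa using integrable_exp_neg_mul_sq one_pos

lemma erfc_zero : erfc 0 = 1 := by
  have hgauss : ∫ r in Ioi (0 : ℝ), Real.exp (-(r ^ 2)) = √Real.pi / 2 := by
    simpa using integral_gaussian_Ioi 1
  rw [erfc, hgauss]
  field_simp

lemma erfc_nonneg (x : ℝ) : 0 ≤ erfc x :=
  mul_nonneg (by positivity) (setIntegral_nonneg measurableSet_Ioi fun _ _ => Real.exp_nonneg _)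

lemma continuous_erfc : Continuous erfc := by
  have herfc : erfc = fun x => 2 / √Real.pi * ((∫ r in Ioi (0 : ℝ), Real.exp (-(r ^ 2))) -
      ∫ r in (0 : ℝ)..x, Real.exp (-(r ^ 2))) := by
    funext x
    rw [erfc, ← intervalIntegral.integral_interval_add_Ioi (a := 0) (b := x)
      integrable_exp_neg_sq.integrableOn integrable_exp_neg_sq.integrableOn, add_sub_cancel_left]
  rw [herfc]
  have := intervalIntegral.continuous_primitive
    (fun a b => integrable_exp_neg_sq.intervalIntegrable (a := a) (b := b)) 0
  fun_prop

lemma erfc_eq_integral_shift (x : ℝ) :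
    erfc x = 2 / √Real.pi * ∫ r in Ioi (0 : ℝ), Real.exp (-((r + x) ^ 2)) := by
  rw [erfc, ← (measurePreserving_add_right (volume : Measure ℝ) x).setIntegral_preimage_emb
    (measurableEmbedding_addRight x), preimage_add_const_Ioi, sub_self]

lemma erfc_le_exp_neg_sq {x : ℝ} (hx : 0 ≤ x) : erfc x ≤ Real.exp (-(x ^ 2)) := by
  have hint : ∫ r in Ioi (0 : ℝ), Real.exp (-((r + x) ^ 2)) ≤
      ∫ r in Ioi (0 : ℝ), Real.exp (-(x ^ 2)) * Real.exp (-(r ^ 2)) := by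
    refine setIntegral_mono_on (integrable_exp_neg_sq.comp_add_right x).integrableOn
      (integrable_exp_neg_sq.const_mul _).integrableOn measurableSet_Ioi fun r hr => ?_
    rw [← Real.exp_add, Real.exp_le_exp]
    nlinarith [mul_nonneg (mem_Ioi.1 hr).le hx]
  calc erfc x
      = 2 / √Real.pi * ∫ r in Ioi (0 : ℝ), Real.exp (-((r + x) ^ 2)) := erfc_eq_integral_shift x
    _ ≤ 2 / √Real.pi * ∫ r in Ioi (0 : ℝ), Real.exp (-(x ^ 2)) * Real.exp (-(r ^ 2)) := by
        gcongr
    _ = Real.exp (-(x ^ 2)) * erfc 0 := by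
        rw [integral_const_mul, erfc]
        ring
    _ = Real.exp (-(x ^ 2)) := by rw [erfc_zero, mul_one]

lemma frac01_eq_one_sub_fract_neg (x : ℝ) : frac01 x = 1 - Int.fract (-x) := by
  rw [frac01, Int.fract, Int.floor_neg]
  push_cast
  ring

lemma frac01_neg_of_fract_eq_zero {x : ℝ} (hx : Int.fract x = 0) : frac01 (-x) = 1 := by
  rw [frac01_eq_one_sub_fract_neg, neg_neg, hx, sub_zero]

lemma frac01_neg {x : ℝ} (hx : Int.fract x ≠ 0) : frac01 (-x) = 1 - frac01 x := by
  rw [frac01_eq_one_sub_fract_neg, frac01_eq_one_sub_fract_neg, neg_neg, Int.fract_neg hx]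
  ring

lemma fract_intCast_div_natCast_eq_zero_iff {N : ℕ} (hN : 0 < N) (a : ℤ) :
    Int.fract ((a : ℝ) / N) = 0 ↔ (N : ℤ) ∣ a := by
  have hN' : (N : ℝ) ≠ 0 := by positivity
  simp_rw [Int.fract_eq_zero_iff, mem_range, eq_div_iff hN', dvd_def, mul_comm (N : ℤ)]
  exact exists_congr fun k => by rw [eq_comm]; norm_cast

lemma cH0_eq {N : ℕ} (hN : 0 < N) (h : ℤ × ℤ) :
    (cH0 N h : ℂ) = (if (N : ℤ) ∣ h.1 then (frac01 (-((h.2 : ℝ) / N)) - 1 / 2 : ℂ) else 0) +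
      (if (N : ℤ) ∣ h.2 then (frac01 (-((h.1 : ℝ) / N)) - 1 / 2 : ℂ) else 0) -
      (if (N : ℤ) ∣ h.1 ∧ (N : ℤ) ∣ h.2 then 1 else 0) := by
  have hdvd (a : ℤ) (ha : (N : ℤ) ∣ a) : frac01 (-((a : ℝ) / N)) = 1 :=
    frac01_neg_of_fract_eq_zero ((fract_intCast_div_natCast_eq_zero_iff hN a).2 ha)
  have hndvd (a : ℤ) (ha : ¬(N : ℤ) ∣ a) : frac01 (-((a : ℝ) / N)) = 1 - frac01 ((a : ℝ) / N) :=
    frac01_neg (mt (fract_intCast_div_natCast_eq_zero_iff hN a).1 ha)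
  by_cases h₁ : (N : ℤ) ∣ h.1 <;> by_cases h₂ : (N : ℤ) ∣ h.2
  · norm_num [cH0, h₁, h₂, hdvd]
  · simp only [cH0, h₁, h₂, hndvd, not_true_eq_false, not_false_eq_true, and_true, and_false,
      if_true, if_false]
    push_cast
    ring
  · simp only [cH0, h₁, h₂, hndvd, not_false_eq_true, and_true, false_and, if_true, if_false]
    push_cast
    ring
  · simp [cH0, h₁, h₂]

/-- The point `h + N p` of the coset `h + Nℤ²`, which is the index set of the theta series. -/
def cosetPoint (N : ℕ) (h p : ℤ × ℤ) : ℤ × ℤ := (h.1 + N * p.1, h.2 + N * p.2)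

lemma injective_add_natCast_mul {N : ℕ} (hN : 0 < N) (a : ℤ) :
    Injective fun q : ℤ => a + N * q :=
  (add_right_injective a).comp (mul_right_injective₀ (by exact_mod_cast hN.ne'))

lemma injective_cosetPoint {N : ℕ} (hN : 0 < N) (h : ℤ × ℤ) : Injective (cosetPoint N h) :=
  (injective_add_natCast_mul hN h.1).prodMap (injective_add_natCast_mul hN h.2)

lemma exists_add_natCast_mul_eq_zero_iff (N : ℕ) (a : ℤ) :
    (∃ q : ℤ, a + N * q = 0) ↔ (N : ℤ) ∣ a :=
  ⟨fun ⟨q, hq⟩ => ⟨-q, by linarith⟩, fun ⟨k, hk⟩ => ⟨-k, by rw [hk]; ring⟩⟩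

lemma zero_mem_range_cosetPoint_iff (N : ℕ) (h : ℤ × ℤ) :
    0 ∈ range (cosetPoint N h) ↔ (N : ℤ) ∣ h.1 ∧ (N : ℤ) ∣ h.2 := by
  simp only [mem_range, Prod.exists, cosetPoint, Prod.mk_eq_zero, exists_and_left, exists_and_right,
    exists_add_natCast_mul_eq_zero_iff]

section Sums

variable {α β M : Type*} [AddCommMonoid M] [TopologicalSpace M]

lemma hasSum_ite_eq_of_injective [DecidableEq β] {f : α → β} (hf : Injective f) (b : β)
    [Decidable (b ∈ range f)] (c : M) :
    HasSum (fun a => if f a = b then c else 0) (if b ∈ range f then c else 0) := by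
  split_ifs with hb
  · obtain ⟨a, rfl⟩ := hb
    simpa using hasSum_single (f := fun a' => if f a' = f a then c else 0) a
      fun a' ha => if_neg (hf.ne ha)
  · have hne (a : α) : f a ≠ b := fun h => hb ⟨a, h⟩
    simpa only [hne, if_false] using hasSum_zero

lemma hasSum_ite_fst_cosetPoint_eq_zero {N : ℕ} (hN : 0 < N) (h : ℤ × ℤ) {f : ℤ → M} {s : M}
    (hf : HasSum (fun q : ℤ => f (h.2 + N * q)) s) :
    HasSum (fun p => if (cosetPoint N h p).1 = 0 then f (cosetPoint N h p).2 else 0)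
      (if (N : ℤ) ∣ h.1 then s else 0) := by
  split_ifs with hdvd
  · obtain ⟨k, hk⟩ := (exists_add_natCast_mul_eq_zero_iff N h.1).2 hdvd
    have hline (q : ℤ) : h.1 + N * q = 0 → q = k := fun hq =>
      injective_add_natCast_mul hN h.1 (hq.trans hk.symm)
    rw [← (Prod.mk_right_injective k).hasSum_iff]
    · simpa only [Function.comp_def, cosetPoint, hk, if_true] using hf
    · rintro ⟨p₁, p₂⟩ hp
      exact if_neg fun h₀ => hp ⟨p₂, by rw [hline p₁ h₀]⟩
  · have hne (p : ℤ × ℤ) : (cosetPoint N h p).1 ≠ 0 := fun h₀ =>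
      hdvd ((exists_add_natCast_mul_eq_zero_iff N h.1).1 ⟨p.1, h₀⟩)
    simpa only [hne, if_false] using hasSum_zero

lemma hasSum_ite_snd_cosetPoint_eq_zero {N : ℕ} (hN : 0 < N) (h : ℤ × ℤ) {f : ℤ → M} {s : M}
    (hf : HasSum (fun q : ℤ => f (h.1 + N * q)) s) :
    HasSum (fun p => if (cosetPoint N h p).2 = 0 then f (cosetPoint N h p).1 else 0)
      (if (N : ℤ) ∣ h.2 then s else 0) :=
  (Equiv.prodComm ℤ ℤ).hasSum_iff
    (f := fun p => if (cosetPoint N h.swap p).1 = 0 then f (cosetPoint N h.swap p).2 else 0).2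
    (hasSum_ite_fst_cosetPoint_eq_zero hN h.swap hf)

end Sums

lemma summable_exp_neg_mul_abs {c : ℝ} (hc : 0 < c) :
    Summable fun m : ℤ => Real.exp (-(c * |(m : ℝ)|)) := by
  have hnat : Summable fun n : ℕ => Real.exp (-(c * n)) :=
    (Real.summable_exp_nat_mul_iff.2 (neg_lt_zero.2 hc)).congr fun n => by ring_nf
  exact Summable.of_nat_of_neg (by simpa using hnat) (by simpa using hnat)

lemma summable_exp_neg_mul_abs_add_abs {c : ℝ} (hc : 0 < c) :
    Summable fun x : ℤ × ℤ => Real.exp (-(c * (|(x.1 : ℝ)| + |(x.2 : ℝ)|))) := by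
  refine ((summable_exp_neg_mul_abs hc).mul_of_nonneg (summable_exp_neg_mul_abs hc)
    (fun _ => Real.exp_nonneg _) fun _ => Real.exp_nonneg _).congr fun x => ?_
  rw [← Real.exp_add]
  ring_nf

section Kernels

variable {τ : ℂ}

lemma norm_eC_sq_sub_sq (τ : ℂ) (x y : ℝ) :
    ‖eC ((((y : ℂ) ^ 2 - (x : ℂ) ^ 2) / 2) * τ)‖ =
      Real.exp (-(Real.pi * τ.im * (y ^ 2 - x ^ 2))) := by
  have him : ((((y : ℂ) ^ 2 - (x : ℂ) ^ 2) / 2) * τ).im = (y ^ 2 - x ^ 2) / 2 * τ.im := by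
    rw [← Complex.im_ofReal_mul]
    push_cast
    rfl
  rw [norm_eC, him]
  ring_nf

lemma norm_phiStar_le (hτ : 0 ≤ τ.im) (x y : ℝ) :
    ‖phiStar τ x y‖ ≤ Real.exp (-(Real.pi * τ.im * (x ^ 2 + y ^ 2))) := by
  have herfc := erfc_le_exp_neg_sq (x := √(2 * Real.pi * τ.im) * |x|) (by positivity)
  rw [mul_pow, Real.sq_sqrt (by positivity), sq_abs] at herfc
  rw [phiStar, norm_mul, norm_mul, norm_eC_sq_sub_sq, Complex.norm_of_nonneg (erfc_nonneg _),
    Complex.norm_real, Real.norm_eq_abs]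
  calc Real.exp (-(Real.pi * τ.im * (y ^ 2 - x ^ 2))) * |Real.sign x| *
        erfc (√(2 * Real.pi * τ.im) * |x|)
      ≤ Real.exp (-(Real.pi * τ.im * (y ^ 2 - x ^ 2))) * 1 *
        Real.exp (-(2 * Real.pi * τ.im * x ^ 2)) := by
        gcongr
        · exact erfc_nonneg _
        · exact abs_sign_le_one x
    _ = Real.exp (-(Real.pi * τ.im * (x ^ 2 + y ^ 2))) := by
        rw [mul_one, ← Real.exp_add]
        ring_nf

lemma phiPlus_eq_zero {x y : ℝ} (hxy : y ^ 2 ≤ x ^ 2) : phiPlus τ x y = 0 := by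
  rw [phiPlus, if_neg hxy.not_gt, mul_zero]

lemma norm_phiPlus_le (τ : ℂ) (x y : ℝ) :
    ‖phiPlus τ x y‖ ≤ Real.exp (-(Real.pi * τ.im * (y ^ 2 - x ^ 2))) := by
  rcases lt_or_ge (x ^ 2) (y ^ 2) with hxy | hxy
  · rw [phiPlus, if_pos hxy, mul_one, norm_mul, norm_eC_sq_sub_sq, Complex.norm_real,
      Real.norm_eq_abs]
    exact mul_le_of_le_one_right (Real.exp_nonneg _) (abs_sign_le_one x)
  · rw [phiPlus_eq_zero hxy, norm_zero]
    exact Real.exp_nonneg _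

lemma continuous_eC_sq_sub_sq (τ : ℂ) :
    Continuous fun p : ℝ × ℝ => eC ((((p.2 : ℂ) ^ 2 - (p.1 : ℂ) ^ 2) / 2) * τ) :=
  continuous_eC.comp (by fun_prop)

lemma continuous_erfc_mul_abs_fst (c : ℝ) :
    Continuous fun p : ℝ × ℝ => (erfc (c * |p.1|) : ℂ) :=
  Complex.continuous_ofReal.comp (continuous_erfc.comp (by fun_prop))

lemma continuousAt_phiStar {p : ℝ × ℝ} (hp : p.1 ≠ 0) : ContinuousAt (uncurry (phiStar τ)) p :=
  ((continuous_eC_sq_sub_sq τ).continuousAt.mul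
    (Complex.continuous_ofReal.continuousAt.comp
      ((continuousAt_real_sign hp).comp continuousAt_fst))).mul
    (continuous_erfc_mul_abs_fst _).continuousAt

lemma tendsto_phiStar_zero (τ : ℂ) :
    Tendsto (uncurry (phiStar τ)) (𝓝[{p | 0 < p.1}] 0) (𝓝 1) := by
  have hlim := ((continuous_eC_sq_sub_sq τ).mul
    (continuous_erfc_mul_abs_fst (√(2 * Real.pi * τ.im)))).tendsto' 0 1
      (by simp [eC_zero, erfc_zero])
  refine (hlim.mono_left nhdsWithin_le_nhds).congr' ?_
  filter_upwards [self_mem_nhdsWithin] with p hp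
  simp only [Pi.mul_apply, uncurry, phiStar, Real.sign_of_pos hp, Complex.ofReal_one, mul_one]

-- Where `x² < y²` the jumps of `φ⁺` and `φ*` across `x = 0` cancel, since `erfc 0 = 1`.
lemma phiTilde_eq_of_sq_lt_sq {x y : ℝ} (hxy : x ^ 2 < y ^ 2) :
    phiTilde τ x y = eC ((((y : ℂ) ^ 2 - (x : ℂ) ^ 2) / 2) * τ) *
      (Real.sign x * (1 - erfc (√(2 * Real.pi * τ.im) * |x|)) : ℝ) := by
  rw [phiTilde, phiPlus, phiStar, if_pos hxy]
  push_cast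
  ring

lemma phiTilde_eq_neg_phiStar {x y : ℝ} (hxy : y ^ 2 ≤ x ^ 2) :
    phiTilde τ x y = -phiStar τ x y := by
  rw [phiTilde, phiPlus_eq_zero hxy, zero_sub]

lemma continuousAt_phiTilde {p : ℝ × ℝ} (hp : p.1 ^ 2 ≠ p.2 ^ 2) :
    ContinuousAt (uncurry (phiTilde τ)) p := by
  have hfst : ContinuousAt (fun q : ℝ × ℝ => q.1 ^ 2) p := by fun_prop
  have hsnd : ContinuousAt (fun q : ℝ × ℝ => q.2 ^ 2) p := by fun_prop
  rcases hp.lt_or_gt with hlt | hgt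
  · have hodd : Continuous fun x : ℝ =>
        Real.sign x * (1 - erfc (√(2 * Real.pi * τ.im) * |x|)) :=
      continuous_sign_mul (continuous_const.sub (continuous_erfc.comp (by fun_prop)))
        (by simp [erfc_zero])
    refine ((continuous_eC_sq_sub_sq τ).mul
      (Complex.continuous_ofReal.comp (hodd.comp continuous_fst))).continuousAt.congr ?_
    filter_upwards [hfst.eventually_lt hsnd hlt] with q hq using (phiTilde_eq_of_sq_lt_sq hq).symm
  · have hp₁ : p.1 ≠ 0 := by
      rintro h₀
      rw [h₀] at hgt
      nlinarith [sq_nonneg p.2]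
    refine (continuousAt_phiStar (τ := τ) hp₁).neg.congr ?_
    filter_upwards [hsnd.eventually_lt hfst hgt] with q hq
      using (phiTilde_eq_neg_phiStar hq.le).symm

end Kernels

section Iota

variable {N : ℕ} {t : ℝ}

lemma iota_sq_add_sq (N : ℕ) (t a b : ℝ) :
    (iota N t a b).1 ^ 2 + (iota N t a b).2 ^ 2 = ((t⁻¹ * a) ^ 2 + (t * b) ^ 2) / N := by
  rw [iota, div_pow, div_pow, Real.sq_sqrt (by positivity)]
  ring

lemma iota_sq_sub_sq (N : ℕ) (ht : t ≠ 0) (a b : ℝ) :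
    (iota N t a b).2 ^ 2 - (iota N t a b).1 ^ 2 = -(2 * (a * b) / N) := by
  rw [iota, div_pow, div_pow, Real.sq_sqrt (by positivity)]
  field_simp
  ring

lemma iota_sq_lt_sq_iff (hN : 0 < N) (ht : t ≠ 0) (a b : ℝ) :
    (iota N t a b).1 ^ 2 < (iota N t a b).2 ^ 2 ↔ a * b < 0 := by
  have hN' : (0 : ℝ) < N := by positivity
  rw [← sub_pos, iota_sq_sub_sq N ht, neg_pos, div_lt_iff₀ hN', zero_mul]
  constructor <;> intro <;> linarith

lemma iota_sq_ne_sq (hN : 0 < N) (ht : t ≠ 0) {a b : ℝ} (hab : a * b ≠ 0) :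
    (iota N t a b).1 ^ 2 ≠ (iota N t a b).2 ^ 2 := by
  have hN' : (N : ℝ) ≠ 0 := by positivity
  rw [ne_comm, ← sub_ne_zero, iota_sq_sub_sq N ht, neg_ne_zero]
  exact div_ne_zero (mul_ne_zero two_ne_zero hab) hN'

lemma iota_inv_swap (N : ℕ) (t a b : ℝ) :
    iota N t⁻¹ b a = ((iota N t a b).1, -(iota N t a b).2) := by
  rw [iota, iota, inv_inv, ← neg_div, neg_sub, add_comm]

lemma phiPlus_iota_swap (N : ℕ) (τ : ℂ) (t a b : ℝ) :
    uncurry (phiPlus τ) (iota N t a b) = uncurry (phiPlus τ) (iota N t⁻¹ b a) := by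
  simp only [iota_inv_swap, uncurry, phiPlus, Complex.ofReal_neg, neg_sq]

lemma phiPlus_iota (hN : 0 < N) (τ : ℂ) (ht : t ≠ 0) (a b : ℝ) :
    uncurry (phiPlus τ) (iota N t a b) = eC (-((a * b / N : ℝ) : ℂ) * τ) *
      (Real.sign (iota N t a b).1 : ℂ) * (if a * b < 0 then 1 else 0) := by
  have hexp : (((iota N t a b).2 : ℂ) ^ 2 - ((iota N t a b).1 : ℂ) ^ 2) / 2 =
      -((a * b / N : ℝ) : ℂ) := by
    rw [← Complex.ofReal_pow, ← Complex.ofReal_pow, ← Complex.ofReal_sub, iota_sq_sub_sq N ht]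
    push_cast
    ring
  simp only [uncurry, phiPlus, hexp, iota_sq_lt_sq_iff hN ht]

end Iota

lemma half_abs_le_abs_intCast_add (m : ℤ) {ε : ℝ} (hε : |ε| ≤ 1 / 2) :
    |(m : ℝ)| / 2 ≤ |m + ε| := by
  rcases eq_or_ne m 0 with rfl | hm
  · simp
  · have hm₁ : 1 ≤ |(m : ℝ)| := by exact_mod_cast Int.one_le_abs hm
    have htri : |(m : ℝ)| ≤ |m + ε| + |ε| := by simpa using abs_sub (m + ε) ε
    linarith

lemma quarter_abs_le_sq_intCast_add (m : ℤ) {ε : ℝ} (hε : |ε| ≤ 1 / 2) :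
    |(m : ℝ)| / 4 ≤ (m + ε) ^ 2 := by
  have hsq : |(m : ℝ)| ≤ |(m : ℝ)| ^ 2 := by exact_mod_cast Int.le_self_sq |m|
  calc |(m : ℝ)| / 4 ≤ (|(m : ℝ)| / 2) ^ 2 := by linarith
    _ ≤ |m + ε| ^ 2 := by gcongr; exact half_abs_le_abs_intCast_add m hε
    _ = (m + ε) ^ 2 := sq_abs _

lemma abs_add_abs_div_le_abs_mul_intCast_add {m n : ℤ} (hm : m ≠ 0) (hn : n ≠ 0) {ε : ℝ}
    (hε : |ε| ≤ 1 / 2) : (|(m : ℝ)| + |(n : ℝ)|) / 8 ≤ |(m + ε) * (n + ε)| := by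
  have hm₁ : 1 ≤ |(m : ℝ)| := by exact_mod_cast Int.one_le_abs hm
  have hn₁ : 1 ≤ |(n : ℝ)| := by exact_mod_cast Int.one_le_abs hn
  calc (|(m : ℝ)| + |(n : ℝ)|) / 8 ≤ |(m : ℝ)| / 2 * (|(n : ℝ)| / 2) := by nlinarith
    _ ≤ |m + ε| * |n + ε| := by
        gcongr
        · exact half_abs_le_abs_intCast_add m hε
        · exact half_abs_le_abs_intCast_add n hε
    _ = |(m + ε) * (n + ε)| := (abs_mul _ _).symm

/-- The argument `ι_t(x₁ + ε, x₂ + ε)` of `φ̃_τ` in the term of `Θ̃_h(τ,t;ε)` at `x`. -/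
def shiftedPoint (N : ℕ) (t ε : ℝ) (x : ℤ × ℤ) : ℝ × ℝ := iota N t (x.1 + ε) (x.2 + ε)

/-- The character value `e(ε(x₁ + x₂ + 2ε)/N)` in the term of `Θ̃_h(τ,t;ε)` at `x`. -/
def shiftTwist (N : ℕ) (ε : ℝ) (x : ℤ × ℤ) : ℂ :=
  eC ((ε * ((x.1 : ℝ) + (x.2 : ℝ) + 2 * ε) / N : ℝ) : ℂ)

/-- The term of `Θ̃_h(τ,t;ε)` at `x`, with the `φ⁺_τ`-part left out when `x` lies on a coordinate
axis: those parts carry the pole of the theta series at `ε = 0`. -/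
def regularTerm (N : ℕ) (τ : ℂ) (t ε : ℝ) (x : ℤ × ℤ) : ℂ :=
  (if x.1 = 0 ∨ x.2 = 0 then -uncurry (phiStar τ) (shiftedPoint N t ε x)
    else uncurry (phiTilde τ) (shiftedPoint N t ε x)) * shiftTwist N ε x

/-- The `φ⁺_τ`-part of the term of `Θ̃_h(τ,t;ε)` at the points `(0, n)` and `(n, 0)`, for small
`ε > 0`. -/
def axisTerm (N : ℕ) (τ : ℂ) (ε : ℝ) (n : ℤ) : ℂ :=
  if n < 0 then -eC (ε * ((1 - τ) * n + (2 - τ) * ε) / N) else 0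

section Terms

variable {N : ℕ} {τ : ℂ} {t ε : ℝ}

lemma thetaTerm_eq (N : ℕ) (h : ℤ × ℤ) (τ : ℂ) (t ε : ℝ) (p : ℤ × ℤ) :
    thetaTerm N h τ t ε p = uncurry (phiTilde τ) (shiftedPoint N t ε (cosetPoint N h p)) *
      shiftTwist N ε (cosetPoint N h p) := rfl

lemma norm_shiftTwist (N : ℕ) (ε : ℝ) (x : ℤ × ℤ) : ‖shiftTwist N ε x‖ = 1 :=
  norm_eC_ofReal _

lemma continuous_shiftedPoint (N : ℕ) (t : ℝ) (x : ℤ × ℤ) :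
    Continuous fun ε => shiftedPoint N t ε x := by
  unfold shiftedPoint iota
  fun_prop

lemma continuous_shiftTwist (N : ℕ) (x : ℤ × ℤ) : Continuous fun ε => shiftTwist N ε x :=
  continuous_eC.comp (by fun_prop)

lemma norm_phiStar_shiftedPoint_le (hτ : 0 ≤ τ.im) (t : ℝ) (hε : |ε| ≤ 1 / 2) (x : ℤ × ℤ) :
    ‖uncurry (phiStar τ) (shiftedPoint N t ε x)‖ ≤ Real.exp
      (-(Real.pi * τ.im / (4 * N) * min (t⁻¹ ^ 2) (t ^ 2) * (|(x.1 : ℝ)| + |(x.2 : ℝ)|))) := by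
  refine (norm_phiStar_le hτ _ _).trans (Real.exp_le_exp.2 (neg_le_neg ?_))
  have h₁ : min (t⁻¹ ^ 2) (t ^ 2) * (|(x.1 : ℝ)| / 4) ≤ (t⁻¹ * (x.1 + ε)) ^ 2 := by
    rw [mul_pow]
    gcongr
    exacts [min_le_left _ _, quarter_abs_le_sq_intCast_add x.1 hε]
  have h₂ : min (t⁻¹ ^ 2) (t ^ 2) * (|(x.2 : ℝ)| / 4) ≤ (t * (x.2 + ε)) ^ 2 := by
    rw [mul_pow]
    gcongr
    exacts [min_le_right _ _, quarter_abs_le_sq_intCast_add x.2 hε]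
  calc Real.pi * τ.im / (4 * N) * min (t⁻¹ ^ 2) (t ^ 2) * (|(x.1 : ℝ)| + |(x.2 : ℝ)|)
      = Real.pi * τ.im * ((min (t⁻¹ ^ 2) (t ^ 2) * (|(x.1 : ℝ)| / 4) +
          min (t⁻¹ ^ 2) (t ^ 2) * (|(x.2 : ℝ)| / 4)) / N) := by ring
    _ ≤ Real.pi * τ.im * (((t⁻¹ * (x.1 + ε)) ^ 2 + (t * (x.2 + ε)) ^ 2) / N) := by gcongr
    _ = _ := by rw [← iota_sq_add_sq, shiftedPoint]

lemma norm_phiPlus_shiftedPoint_le (hN : 0 < N) (hτ : 0 ≤ τ.im) (ht : t ≠ 0) (hε : |ε| ≤ 1 / 2)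
    {x : ℤ × ℤ} (hx₁ : x.1 ≠ 0) (hx₂ : x.2 ≠ 0) :
    ‖uncurry (phiPlus τ) (shiftedPoint N t ε x)‖ ≤
      Real.exp (-(Real.pi * τ.im / (4 * N) * (|(x.1 : ℝ)| + |(x.2 : ℝ)|))) := by
  rcases lt_or_ge ((x.1 + ε) * (x.2 + ε)) 0 with hneg | hnonneg
  · have hprod := abs_add_abs_div_le_abs_mul_intCast_add hx₁ hx₂ hε
    rw [abs_of_neg hneg] at hprod
    refine (norm_phiPlus_le τ _ _).trans (Real.exp_le_exp.2 (neg_le_neg ?_))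
    calc Real.pi * τ.im / (4 * N) * (|(x.1 : ℝ)| + |(x.2 : ℝ)|)
        = Real.pi * τ.im * (2 * ((|(x.1 : ℝ)| + |(x.2 : ℝ)|) / 8) / N) := by ring
      _ ≤ Real.pi * τ.im * (2 * -((x.1 + ε) * (x.2 + ε)) / N) := by gcongr
      _ = _ := by
          rw [shiftedPoint, iota_sq_sub_sq N ht]
          ring
  · rw [uncurry, shiftedPoint,
      phiPlus_eq_zero (not_lt.1 (mt (iota_sq_lt_sq_iff hN ht _ _).1 hnonneg.not_gt)), norm_zero]
    exact Real.exp_nonneg _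

lemma exists_summable_norm_regularTerm_le (hN : 0 < N) (hτ : 0 < τ.im) (ht : t ≠ 0) :
    ∃ B : ℤ × ℤ → ℝ, Summable B ∧
      ∀ ε : ℝ, |ε| ≤ 1 / 2 → ∀ x, ‖regularTerm N τ t ε x‖ ≤ B x := by
  have hplus : 0 < Real.pi * τ.im / (4 * N) := by positivity
  have hstar : 0 < Real.pi * τ.im / (4 * N) * min (t⁻¹ ^ 2) (t ^ 2) := by positivity
  refine ⟨_, (summable_exp_neg_mul_abs_add_abs hplus).add
    (summable_exp_neg_mul_abs_add_abs hstar), fun ε hε x => ?_⟩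
  rw [regularTerm, norm_mul, norm_shiftTwist, mul_one]
  split_ifs with hx
  · rw [norm_neg]
    exact (norm_phiStar_shiftedPoint_le hτ.le t hε x).trans
      (le_add_of_nonneg_left (Real.exp_nonneg _))
  · rw [not_or] at hx
    exact (norm_sub_le _ _).trans (add_le_add
      (norm_phiPlus_shiftedPoint_le hN hτ.le ht hε hx.1 hx.2)
      (norm_phiStar_shiftedPoint_le hτ.le t hε x))

lemma shiftedPoint_zero_fst_ne_zero (hN : 0 < N) (ht : t ≠ 0) {x : ℤ × ℤ} (hx : x ≠ 0)
    (haxis : x.1 = 0 ∨ x.2 = 0) : (shiftedPoint N t 0 x).1 ≠ 0 := by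
  have hsqrt : √(2 * N : ℝ) ≠ 0 := by positivity
  obtain ⟨m, n⟩ := x
  rcases haxis with rfl | rfl <;> simp_all [shiftedPoint, iota]

lemma continuousAt_regularTerm (hN : 0 < N) (τ : ℂ) (ht : t ≠ 0) {x : ℤ × ℤ} (hx : x ≠ 0) :
    ContinuousAt (fun ε => regularTerm N τ t ε x) 0 := by
  have hpoint := (continuous_shiftedPoint N t x).continuousAt (x := 0)
  have htwist := (continuous_shiftTwist N x).continuousAt (x := 0)
  by_cases haxis : x.1 = 0 ∨ x.2 = 0
  · simp only [regularTerm, if_pos haxis]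
    exact (ContinuousAt.comp (f := fun ε => shiftedPoint N t ε x)
      (continuousAt_phiStar (shiftedPoint_zero_fst_ne_zero hN ht hx haxis)) hpoint).neg.mul htwist
  · simp only [regularTerm, if_neg haxis]
    have hprod : ((x.1 : ℝ) + 0) * (x.2 + 0) ≠ 0 := by simpa using haxis
    exact (ContinuousAt.comp (f := fun ε => shiftedPoint N t ε x)
      (continuousAt_phiTilde (iota_sq_ne_sq hN ht hprod)) hpoint).mul htwist

lemma regularTerm_zero_zero (N : ℕ) (τ : ℂ) (t : ℝ) : regularTerm N τ t 0 0 = 0 := by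
  simp [regularTerm, shiftedPoint, iota, phiStar, uncurry]

lemma tendsto_regularTerm_origin (hN : 0 < N) (τ : ℂ) (ht : 0 < t) :
    Tendsto (fun ε => regularTerm N τ t ε 0) (𝓝[>] 0) (𝓝 (-1)) := by
  have hpoint : Tendsto (fun ε => shiftedPoint N t ε 0) (𝓝[>] 0) (𝓝[{p | 0 < p.1}] 0) := by
    refine tendsto_nhdsWithin_iff.2 ⟨?_, ?_⟩
    · have hzero : shiftedPoint N t 0 0 = 0 := by simp [shiftedPoint, iota]
      exact hzero ▸ ((continuous_shiftedPoint N t 0).tendsto 0).mono_left nhdsWithin_le_nhds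
    · filter_upwards [self_mem_nhdsWithin] with ε hε
      have hε' : 0 < ε := hε
      simp only [shiftedPoint, iota, Prod.fst_zero, Prod.snd_zero, Int.cast_zero, zero_add]
      exact div_pos (by positivity) (by positivity)
  have htwist : Tendsto (fun ε => shiftTwist N ε 0) (𝓝[>] 0) (𝓝 1) := by
    simpa [shiftTwist, eC_zero] using
      ((continuous_shiftTwist N 0).tendsto 0).mono_left nhdsWithin_le_nhds
  simpa [regularTerm] using ((tendsto_phiStar_zero τ).comp hpoint).neg.mul htwist

lemma tendsto_regularTerm (hN : 0 < N) (τ : ℂ) (ht : 0 < t) (x : ℤ × ℤ) :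
    Tendsto (fun ε => regularTerm N τ t ε x) (𝓝[>] 0)
      (𝓝 (regularTerm N τ t 0 x - if x = 0 then 1 else 0)) := by
  rcases eq_or_ne x 0 with rfl | hx
  · simpa [regularTerm_zero_zero] using tendsto_regularTerm_origin hN τ ht
  · simpa [hx] using (continuousAt_regularTerm hN τ ht.ne' hx).tendsto.mono_left nhdsWithin_le_nhds

end Terms


section AxisSums

variable {N : ℕ} {τ : ℂ} {t ε : ℝ}

lemma axisTerm_of_nonneg (N : ℕ) (τ : ℂ) (ε : ℝ) {n : ℤ} (hn : 0 ≤ n) : axisTerm N τ ε n = 0 :=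
  if_neg hn.not_gt

lemma phiPlus_iota_mul_eC_eq_axisTerm (hN : 0 < N) (τ : ℂ) (ht : 0 < t) (hε : 0 < ε)
    (hεt : ε < t ^ 2 / (1 + t ^ 2)) (n : ℤ) :
    uncurry (phiPlus τ) (iota N t ε (n + ε)) * eC ((ε * (n + 2 * ε) / N : ℝ) : ℂ) =
      axisTerm N τ ε n := by
  rw [lt_div_iff₀ (by positivity)] at hεt
  rw [phiPlus_iota hN τ ht.ne']
  rcases lt_or_ge n 0 with hn | hn
  · have hn' : (n : ℝ) ≤ -1 := by exact_mod_cast Int.le_sub_one_of_lt hn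
    have hlt : n + ε < 0 := by nlinarith
    have hfst : t⁻¹ * ε + t * (n + ε) < 0 := by
      have heq : t⁻¹ * ε + t * (n + ε) = t⁻¹ * (ε * (1 + t ^ 2) + t ^ 2 * n) := by
        field_simp
        ring
      rw [heq]
      exact mul_neg_of_pos_of_neg (by positivity) (by nlinarith)
    have hsign : Real.sign (iota N t ε (n + ε)).1 = -1 :=
      Real.sign_of_neg (div_neg_of_neg_of_pos hfst (by positivity))
    rw [hsign, if_pos (mul_neg_of_pos_of_neg hε hlt), axisTerm, if_pos hn, mul_one,
      Complex.ofReal_neg, Complex.ofReal_one, mul_neg_one, neg_mul, ← eC_add]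
    push_cast
    ring_nf
  · have hprod : 0 ≤ ε * (n + ε) := by positivity
    rw [if_neg hprod.not_gt, mul_zero, zero_mul, axisTerm_of_nonneg N τ ε hn]

lemma phiTilde_shiftedPoint_mul_shiftTwist (hN : 0 < N) (τ : ℂ) (ht : 0 < t) (hε : 0 < ε)
    (hε₁ : ε < 1 / (1 + t ^ 2)) (hε₂ : ε < t ^ 2 / (1 + t ^ 2)) (x : ℤ × ℤ) :
    uncurry (phiTilde τ) (shiftedPoint N t ε x) * shiftTwist N ε x =
      regularTerm N τ t ε x + ((if x.1 = 0 then axisTerm N τ ε x.2 else 0) +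
        (if x.2 = 0 then axisTerm N τ ε x.1 else 0)) := by
  have hε₁' : ε < t⁻¹ ^ 2 / (1 + t⁻¹ ^ 2) := by
    convert hε₁ using 1
    field_simp
    ring
  have hfst (n : ℤ) : uncurry (phiPlus τ) (shiftedPoint N t ε (0, n)) * shiftTwist N ε (0, n) =
      axisTerm N τ ε n := by
    simpa [shiftedPoint, shiftTwist] using phiPlus_iota_mul_eC_eq_axisTerm hN τ ht hε hε₂ n
  have hsnd (m : ℤ) : uncurry (phiPlus τ) (shiftedPoint N t ε (m, 0)) * shiftTwist N ε (m, 0) =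
      axisTerm N τ ε m := by
    simpa [shiftedPoint, shiftTwist, phiPlus_iota_swap N τ t] using
      phiPlus_iota_mul_eC_eq_axisTerm hN τ (inv_pos.2 ht) hε hε₁' m
  have hsub (p : ℝ × ℝ) : uncurry (phiTilde τ) p =
      uncurry (phiPlus τ) p - uncurry (phiStar τ) p := rfl
  obtain ⟨m, n⟩ := x
  rcases eq_or_ne m 0 with rfl | hm <;> rcases eq_or_ne n 0 with rfl | hn
  · simp [regularTerm, hsub, sub_mul, hfst, axisTerm_of_nonneg N τ ε le_rfl]
  · simp only [regularTerm, true_or, if_true, hsub, sub_mul, neg_mul, hfst, hn, if_false, add_zero]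
    ring
  · simp only [regularTerm, or_true, if_true, hsub, sub_mul, neg_mul, hsnd, hm, if_false, zero_add]
    ring
  · simp [regularTerm, hm, hn]

lemma phiTilde_shiftedPoint_zero_mul_shiftTwist (hN : 0 < N) (τ : ℂ) (ht : t ≠ 0) (x : ℤ × ℤ) :
    uncurry (phiTilde τ) (shiftedPoint N t 0 x) * shiftTwist N 0 x = regularTerm N τ t 0 x := by
  rw [regularTerm]
  split_ifs with hx
  · have hprod : ((x.1 : ℝ) + 0) * (x.2 + 0) = 0 := by simpa using hx
    rw [uncurry, shiftedPoint, phiTilde_eq_neg_phiStar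
      (not_lt.1 (mt (iota_sq_lt_sq_iff hN ht _ _).1 hprod.not_lt)), uncurry]
  · rfl

/-- The sum of `axisTerm` over a residue class `b` mod `N`, where `r = ⟨-b/N⟩`. -/
def axisSum (N : ℕ) (τ : ℂ) (r ε : ℝ) : ℂ :=
  eC ((2 - τ) * ε ^ 2 / N + r * ((τ - 1) * ε)) / (eC ((τ - 1) * ε) - 1)

lemma axisTerm_eq_neg_mul_pow (hN : 0 < N) (τ : ℂ) (r ε : ℝ) {n : ℤ} (k : ℕ) (hn : n < 0)
    (hnr : (n : ℝ) = -(N * (r + k))) :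
    axisTerm N τ ε n =
      -(eC ((2 - τ) * ε ^ 2 / N + r * ((τ - 1) * ε)) * eC ((τ - 1) * ε) ^ k) := by
  have hN' : (N : ℂ) ≠ 0 := by exact_mod_cast hN.ne'
  have hnr' : (n : ℂ) = -(N * (r + k)) := by exact_mod_cast congrArg Complex.ofReal hnr
  rw [axisTerm, if_pos hn, ← eC_nat_mul, ← eC_add, hnr']
  congr 2
  field_simp
  ring

lemma hasSum_axisTerm (hN : 0 < N) (hτ : 0 < τ.im) (hε : 0 < ε) (b : ℤ) :
    HasSum (fun q : ℤ => axisTerm N τ ε (b + N * q)) (axisSum N τ (frac01 (-((b : ℝ) / N))) ε) := by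
  have hN' : (0 : ℝ) < N := by positivity
  set C : ℤ := ⌈-((b : ℝ) / N)⌉ with hC
  have hneg_iff (q : ℤ) : b + N * q < 0 ↔ q < C := by
    rw [hC, Int.lt_ceil, ← neg_div, lt_div_iff₀ hN', ← Int.cast_lt (R := ℝ)]
    push_cast
    constructor <;> intro <;> linarith
  have hinj : Injective fun k : ℕ => C - 1 - k := fun k l hkl => by simpa using hkl
  have hterm (k : ℕ) : axisTerm N τ ε (b + N * (C - 1 - k)) =
      -(eC ((2 - τ) * ε ^ 2 / N + frac01 (-((b : ℝ) / N)) * ((τ - 1) * ε)) *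
        eC ((τ - 1) * ε) ^ k) := by
    refine axisTerm_eq_neg_mul_pow hN τ _ ε k ((hneg_iff _).2 (by lia)) ?_
    rw [frac01, ← hC]
    push_cast
    field_simp
    ring
  have hnorm : ‖eC ((τ - 1) * ε)‖ < 1 := by
    have him : ((τ - 1) * ε).im = τ.im * ε := by simp
    rw [norm_eC, him, Real.exp_lt_one_iff, neg_lt_zero]
    positivity
  have hsupp (q : ℤ) (hq : q ∉ range fun k : ℕ => C - 1 - k) : axisTerm N τ ε (b + N * q) = 0 :=
    axisTerm_of_nonneg N τ ε (not_lt.1 fun hlt => hq ⟨(C - 1 - q).toNat, by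
      have := (hneg_iff q).1 hlt
      simp only
      lia⟩)
  rw [← hinj.hasSum_iff hsupp, axisSum, ← neg_sub 1 (eC _), div_neg, div_eq_mul_inv]
  exact ((hasSum_geometric_of_norm_lt_one hnorm).mul_left _).neg.congr_fun hterm

end AxisSums

section Bernoulli

lemma tendsto_exp_sub_one_div : Tendsto (fun z : ℂ => (Complex.exp z - 1) / z) (𝓝[≠] 0) (𝓝 1) := by
  have hslope := (Complex.hasDerivAt_exp 0).tendsto_slope
  simpa [slope_fun_def_field] using hslope

lemma tendsto_exp_sub_one_sub_div_sq :
    Tendsto (fun z : ℂ => (Complex.exp z - 1 - z) / z ^ 2) (𝓝[≠] 0) (𝓝 (1 / 2)) := by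
  have hsmall := (Complex.exp_sub_sum_range_succ_isLittleO_pow 2).tendsto_div_nhds_zero
  have hlim := (hsmall.mono_left (nhdsWithin_le_nhds (s := {0}ᶜ))).add_const (1 / 2)
  rw [zero_add] at hlim
  refine hlim.congr' ?_
  filter_upwards [self_mem_nhdsWithin] with z (hz : z ≠ 0)
  simp only [Finset.sum_range_succ, Finset.sum_range_zero, Nat.factorial]
  push_cast
  field_simp
  ring

lemma tendsto_div_exp_sub_one_sub_one_div {g : ℂ → ℂ} {r : ℂ} (hg : HasDerivAt g r 0)
    (hg₀ : g 0 = 1) :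
    Tendsto (fun z => g z / (Complex.exp z - 1) - 1 / z) (𝓝[≠] 0) (𝓝 (r - 1 / 2)) := by
  have hslope : Tendsto (fun z => (g z - 1) / z) (𝓝[≠] 0) (𝓝 r) := by
    simpa [slope_fun_def_field, hg₀] using hg.tendsto_slope
  have hlim := (hslope.sub tendsto_exp_sub_one_sub_div_sq).div tendsto_exp_sub_one_div one_ne_zero
  rw [div_one] at hlim
  refine hlim.congr' ?_
  filter_upwards [self_mem_nhdsWithin, tendsto_exp_sub_one_div.eventually_ne one_ne_zero]
    with z (hz : z ≠ 0) hexp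
  have hexp' : Complex.exp z - 1 ≠ 0 := (div_ne_zero_iff.1 hexp).1
  simp only [Pi.div_apply]
  field_simp
  ring

lemma tendsto_axisSum_sub (N : ℕ) {τ : ℂ} (hτ : τ ≠ 1) (r : ℝ) :
    Tendsto (fun ε : ℝ => axisSum N τ r ε - 1 / (2 * Real.pi * Complex.I * (τ - 1) * ε)) (𝓝[>] 0)
      (𝓝 (r - 1 / 2)) := by
  set ω : ℂ := 2 * Real.pi * Complex.I * (τ - 1) with hω
  set κ : ℂ := 2 * Real.pi * Complex.I * (2 - τ) / N with hκ
  have hω₀ : ω ≠ 0 := mul_ne_zero Complex.two_pi_I_ne_zero (sub_ne_zero.2 hτ)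
  have hderiv : HasDerivAt (fun z : ℂ => Complex.exp (κ / ω ^ 2 * z ^ 2 + r * z)) r 0 := by
    have hexponent := (((hasDerivAt_id (0 : ℂ)).pow 2).const_mul (κ / ω ^ 2)).add
      ((hasDerivAt_id (0 : ℂ)).const_mul (r : ℂ))
    simpa using hexponent.cexp
  have hscale : Tendsto (fun ε : ℝ => ω * ε) (𝓝[>] 0) (𝓝[≠] 0) := by
    refine tendsto_nhdsWithin_iff.2 ⟨?_, ?_⟩
    · have hcont : Continuous fun ε : ℝ => ω * ε := by fun_prop
      exact (hcont.tendsto' 0 0 (by simp)).mono_left nhdsWithin_le_nhds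
    · filter_upwards [self_mem_nhdsWithin] with ε (hε : 0 < ε)
      exact mul_ne_zero hω₀ (Complex.ofReal_ne_zero.2 hε.ne')
  refine ((tendsto_div_exp_sub_one_sub_one_div hderiv (by simp)).comp hscale).congr fun ε => ?_
  simp only [Function.comp_apply, axisSum, eC]
  congr 3
  · field_simp
    rw [hω, hκ]
    ring
  · rw [hω]
    ring_nf

end Bernoulli

/-- The joint contribution of the two coordinate axes to `Θ̃_h(τ,t;ε)`, which carries its pole at
`ε = 0`. -/
def polarPart (N : ℕ) (h : ℤ × ℤ) (τ : ℂ) (ε : ℝ) : ℂ :=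
  (if (N : ℤ) ∣ h.1 then axisSum N τ (frac01 (-((h.2 : ℝ) / N))) ε else 0) +
    (if (N : ℤ) ∣ h.2 then axisSum N τ (frac01 (-((h.1 : ℝ) / N))) ε else 0)

section Assembly

variable {N : ℕ} {τ : ℂ} {t : ℝ}

lemma tendsto_polarPart_sub (hN : 0 < N) (h : ℤ × ℤ) (hτ : τ ≠ 1) :
    Tendsto (fun ε : ℝ =>
        polarPart N h τ ε - (cMinus1 N h : ℂ) / (2 * Real.pi * Complex.I * (τ - 1) * ε))
      (𝓝[>] 0) (𝓝 (cH0 N h + if (N : ℤ) ∣ h.1 ∧ (N : ℤ) ∣ h.2 then 1 else 0)) := by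
  have haxis (P : Prop) [Decidable P] (r : ℝ) :
      Tendsto (fun ε : ℝ => (if P then axisSum N τ r ε else 0) -
          (if P then 1 else 0) / (2 * Real.pi * Complex.I * (τ - 1) * ε))
        (𝓝[>] 0) (𝓝 (if P then r - 1 / 2 else 0)) := by
    split_ifs
    · exact tendsto_axisSum_sub N hτ r
    · simp
  rw [cH0_eq hN, sub_add_cancel]
  refine ((haxis _ _).add (haxis _ _)).congr fun ε => ?_
  rw [polarPart, cMinus1]
  push_cast
  ring

lemma summable_regularTerm (hN : 0 < N) (h : ℤ × ℤ) (hτ : 0 < τ.im) (ht : t ≠ 0) {ε : ℝ}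
    (hε : |ε| ≤ 1 / 2) : Summable fun p => regularTerm N τ t ε (cosetPoint N h p) := by
  obtain ⟨B, hB, hle⟩ := exists_summable_norm_regularTerm_le hN hτ ht
  exact (hB.comp_injective (injective_cosetPoint hN h)).of_norm_bounded fun p => hle ε hε _

lemma hasSum_thetaTerm (hN : 0 < N) (h : ℤ × ℤ) (hτ : 0 < τ.im) (ht : 0 < t) {ε : ℝ}
    (hε : 0 < ε) (hεt : ε < min (1 / (1 + t ^ 2)) (t ^ 2 / (1 + t ^ 2))) :
    HasSum (thetaTerm N h τ t ε)
      ((∑' p, regularTerm N τ t ε (cosetPoint N h p)) + polarPart N h τ ε) := by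
  obtain ⟨hε₁, hε₂⟩ := lt_min_iff.1 hεt
  have hhalf : |ε| ≤ 1 / 2 := by
    rw [lt_div_iff₀ (by positivity)] at hε₁ hε₂
    rw [abs_of_pos hε]
    nlinarith
  have hpolar := (hasSum_ite_fst_cosetPoint_eq_zero hN h (hasSum_axisTerm hN hτ hε h.2)).add
    (hasSum_ite_snd_cosetPoint_eq_zero hN h (hasSum_axisTerm hN hτ hε h.1))
  refine ((summable_regularTerm hN h hτ ht.ne' hhalf).hasSum.add hpolar).congr_fun fun p => ?_
  rw [thetaTerm_eq, phiTilde_shiftedPoint_mul_shiftTwist hN τ ht hε hε₁ hε₂]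

lemma thetaTerm_zero_eq (hN : 0 < N) (h : ℤ × ℤ) (τ : ℂ) (ht : t ≠ 0) (p : ℤ × ℤ) :
    thetaTerm N h τ t 0 p = regularTerm N τ t 0 (cosetPoint N h p) := by
  rw [thetaTerm_eq, phiTilde_shiftedPoint_zero_mul_shiftTwist hN τ ht]

lemma tendsto_tsum_regularTerm (hN : 0 < N) (h : ℤ × ℤ) (hτ : 0 < τ.im) (ht : 0 < t) :
    Tendsto (fun ε => ∑' p, regularTerm N τ t ε (cosetPoint N h p)) (𝓝[>] 0)
      (𝓝 ((∑' p, thetaTerm N h τ t 0 p) -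
        if (N : ℤ) ∣ h.1 ∧ (N : ℤ) ∣ h.2 then 1 else 0)) := by
  obtain ⟨B, hB, hle⟩ := exists_summable_norm_regularTerm_le hN hτ ht.ne'
  classical
  have hjump := hasSum_ite_eq_of_injective (injective_cosetPoint hN h) 0 (1 : ℂ)
  have hlimit := (summable_regularTerm hN h hτ ht.ne' (ε := 0) (by norm_num)).hasSum.sub hjump
  simp only [zero_mem_range_cosetPoint_iff, ← thetaTerm_zero_eq hN h τ ht.ne'] at hlimit
  rw [← hlimit.tsum_eq]
  refine tendsto_tsum_of_dominated_convergence (hB.comp_injective (injective_cosetPoint hN h))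
    (fun p => ?_) ?_
  · rw [thetaTerm_zero_eq hN h τ ht.ne']
    exact tendsto_regularTerm hN τ ht _
  · filter_upwards [Ioo_mem_nhdsGT (one_half_pos (α := ℝ))] with ε hε p
    exact hle ε (abs_le.2 ⟨by linarith [hε.1], hε.2.le⟩) _

end Assembly

/-- the shifted series `Θ̃_h(τ,t;ε)` converges absolutely for
`0 < ε < min(1/(1+t²), t²/(1+t²))`, the unshifted series converges absolutely, and
`lim_{ε→0⁺} [Θ̃_h(τ,t;ε) - c_{-1}(h)/(2πi(τ-1)ε)] = c_h(0) + Θ̃_h(τ,t;0)`. -/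
theorem stmt16 (N : ℕ) (hN : 0 < N) (h : ℤ × ℤ) (τ : ℂ) (hτ : 0 < τ.im)
    (t : ℝ) (ht : 0 < t) :
    (∀ ε : ℝ, 0 < ε → ε < min (1 / (1 + t ^ 2)) (t ^ 2 / (1 + t ^ 2)) →
      Summable (thetaTerm N h τ t ε)) ∧
    Summable (thetaTerm N h τ t 0) ∧
    Tendsto (fun ε : ℝ =>
        (∑' p : ℤ × ℤ, thetaTerm N h τ t ε p) -
          (cMinus1 N h : ℂ) / (2 * Real.pi * Complex.I * (τ - 1) * ε))
      (nhdsWithin 0 (Set.Ioi 0))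
      (nhds ((cH0 N h : ℂ) + ∑' p : ℤ × ℤ, thetaTerm N h τ t 0 p)) := by
  have hbound : 0 < min (1 / (1 + t ^ 2)) (t ^ 2 / (1 + t ^ 2)) := by positivity
  have hτ₁ : τ ≠ 1 := by rintro rfl; simp at hτ
  refine ⟨fun ε hε hεt => (hasSum_thetaTerm hN h hτ ht hε hεt).summable, ?_, ?_⟩
  · exact (summable_regularTerm hN h hτ ht.ne' (by norm_num)).congr fun p =>
      (thetaTerm_zero_eq hN h τ ht.ne' p).symm
  · convert ((tendsto_tsum_regularTerm hN h hτ ht).add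
      (tendsto_polarPart_sub hN h hτ₁)).congr' ?_ using 2
    · ring
    · filter_upwards [Ioo_mem_nhdsGT hbound] with ε hε
      rw [(hasSum_thetaTerm hN h hτ ht hε.1 hε.2).tsum_eq, add_sub_assoc]

end
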